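/- Let μ ∈ ℝ and σ > 0, and define f : ℝ → [0,1] by, with z = (x−μ)/σ: f(x) = 2/(9z²) if z ≥ √(4/3), f(x) = (3 − √3·z)/6 if 0 < z < √(4/3), and f(x) = 1 if z ≤ 0. Then: (i) for every Q ∈ H_US(μ,σ) and every α ∈ (0,1), Q({x : f(x) ≤ α}) ≤ α; and (ii) for every α ∈ (0,1/2], sup_{Q∈H_US(μ,σ)} Q({x : f(x) ≤ α}) = α. That is, f is a semi-precise p-variable for H_US(μ,σ). -/

import Mathlib

open MeasureTheory Set
open scoped ENNReal

/-- Mean of a distribution on ℝ. -/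
noncomputable def distMean (Q : Measure ℝ) : ℝ := ∫ x, x ∂Q

/-- Variance of a distribution on ℝ. -/
noncomputable def distVar (Q : Measure ℝ) : ℝ := ∫ x, (x - distMean Q)^2 ∂Q

/-- `H(μ,σ)`: Borel probability measures on ℝ with finite second moment,
mean at most `μ`, and variance at most `σ²`. -/
def MemH (μ σ : ℝ) (Q : Measure ℝ) : Prop :=
  IsProbabilityMeasure Q ∧ Integrable (fun x => x^2) Q ∧
    distMean Q ≤ μ ∧ distVar Q ≤ σ^2

/-- A distribution `Q` with mean `m` is symmetric if
`Q((-∞, m−x]) = Q([m+x, ∞))` for all `x`. -/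
def IsSymmetricDist (Q : Measure ℝ) : Prop :=
  ∀ x : ℝ, Q (Iic (distMean Q - x)) = Q (Ici (distMean Q + x))

/-- A distribution on ℝ is unimodal: for some `x₀` it is a nonnegative multiple of
the Dirac mass at `x₀` plus a measure with a Lebesgue density that is nondecreasing
on `(-∞, x₀)` and nonincreasing on `(x₀, ∞)`. -/
def Unimodal (Q : Measure ℝ) : Prop :=
  ∃ (x₀ : ℝ) (c : ℝ≥0∞) (f : ℝ → ℝ≥0∞),
    Q = c • Measure.dirac x₀ + volume.withDensity f ∧
    MonotoneOn f (Iio x₀) ∧ AntitoneOn f (Ioi x₀)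

/-- The p-variable for `H_US(μ,σ)`: with `z = (x−μ)/σ`, equals `2/(9z²)` if
`z ≥ √(4/3)`, `(3 − √3 z)/6` if `0 < z < √(4/3)`, and `1` if `z ≤ 0`. -/
noncomputable def pUS (μ σ : ℝ) (x : ℝ) : ℝ :=
  if Real.sqrt (4/3) ≤ (x - μ) / σ then 2 / (9 * ((x - μ) / σ)^2)
  else if 0 < (x - μ) / σ then (3 - Real.sqrt 3 * ((x - μ) / σ)) / 6
  else 1

lemma IsSymmetricDist.map_reflect {Q : Measure ℝ} [IsFiniteMeasure Q] (h : IsSymmetricDist Q) :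
    Q.map (fun x => 2 * distMean Q - x) = Q := by
  refine Measure.ext_of_Iic _ _ fun a => ?_
  rw [Measure.map_apply (by fun_prop) measurableSet_Iic]
  have h1 := h (distMean Q - a)
  rw [sub_sub_cancel] at h1
  rw [h1]
  congr 1
  ext x
  simp only [mem_preimage, mem_Iic, mem_Ici]
  constructor <;> intro _ <;> linarith

lemma map_reflect_withDensity (a : ℝ) (f : ℝ → ℝ≥0∞) :
    (volume.withDensity f).map (fun x => a - x) = volume.withDensity (fun x => f (a - x)) := by
  ext s hs
  have hm : Measurable (fun x : ℝ => a - x) := by fun_prop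
  have hemb : MeasurableEmbedding (fun x : ℝ => a - x) :=
    (Homeomorph.subLeft a).measurableEmbedding
  have hpres : MeasurePreserving (fun x : ℝ => a - x) volume volume :=
    Measure.measurePreserving_sub_left volume a
  rw [Measure.map_apply hm hs, withDensity_apply _ (hm hs), withDensity_apply _ hs,
    ← hpres.setLIntegral_comp_preimage_emb hemb (fun x => f (a - x)) s]
  simp only [sub_sub_cancel]

/-- A symmetric unimodal distribution has a mode not exceeding its mean. -/
lemma Unimodal.exists_mode_le_mean {Q : Measure ℝ} [IsFiniteMeasure Q] (hs : IsSymmetricDist Q)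
    (hu : Unimodal Q) :
    ∃ x₀ ≤ distMean Q, ∃ (c : ℝ≥0∞) (f : ℝ → ℝ≥0∞),
      Q = c • Measure.dirac x₀ + volume.withDensity f ∧ AntitoneOn f (Ioi x₀) := by
  obtain ⟨x₀, c, f, hQ, hmono, hanti⟩ := hu
  rcases le_total x₀ (distMean Q) with hle | hle
  · exact ⟨x₀, hle, c, f, hQ, hanti⟩
  · refine ⟨2 * distMean Q - x₀, by linarith, c, fun x => f (2 * distMean Q - x), ?_, ?_⟩
    · generalize hm : distMean Q = m
      have hmap := hs.map_reflect
      rw [hm] at hmap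
      have hmeas : Measurable (fun x : ℝ => 2 * m - x) := by fun_prop
      rw [← hmap, hQ, Measure.map_add _ _ hmeas, Measure.map_smul,
        Measure.map_dirac' hmeas, map_reflect_withDensity]
    · intro x hx y hy hxy
      simp only [mem_Ioi] at hx hy
      exact hmono (mem_Iio.2 (by linarith)) (mem_Iio.2 (by linarith)) (by linarith)

lemma lintegral_Icc_ofReal_sub_sq (m k r lam τ : ℝ) (hkr : k ≤ r)
    (h0 : ∀ x ∈ Icc (m + k) (m + r), 0 ≤ 1 - (lam * (x - m) ^ 2 + τ)) :
    ∫⁻ x in Icc (m + k) (m + r), ENNReal.ofReal (1 - (lam * (x - m) ^ 2 + τ)) =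
      ENNReal.ofReal ((r - k) - (lam * (r ^ 3 - k ^ 3) / 3 + τ * (r - k))) := by
  rw [← ofReal_integral_eq_lintegral_ofReal
    ((by fun_prop : Continuous _).continuousOn.integrableOn_Icc)
    ((ae_restrict_iff' measurableSet_Icc).2 (Filter.Eventually.of_forall h0)),
    integral_Icc_eq_integral_Ioc, ← intervalIntegral.integral_of_le (by linarith)]
  congr 1
  rw [intervalIntegral.integral_comp_sub_right (fun y => 1 - (lam * y ^ 2 + τ))]
  rw [intervalIntegral.integral_sub (by simp)
    (Continuous.intervalIntegrable (by fun_prop) _ _), intervalIntegral.integral_add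
    (Continuous.intervalIntegrable (by fun_prop) _ _) (by simp)]
  simp
  ring

lemma lintegral_Ioo_ofReal_sq_add (m k lam τ : ℝ) (hk : 0 ≤ k) (hl : 0 ≤ lam) (hτ : 0 ≤ τ) :
    ∫⁻ x in Ioo m (m + k), ENNReal.ofReal (lam * (x - m) ^ 2 + τ) =
      ENNReal.ofReal (lam * k ^ 3 / 3 + τ * k) := by
  rw [restrict_Ioo_eq_restrict_Ioc, ← ofReal_integral_eq_lintegral_ofReal
    ((by fun_prop : Continuous _).integrableOn_Ioc)
    (Filter.Eventually.of_forall fun x => by positivity),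
    ← intervalIntegral.integral_of_le (by linarith)]
  congr 1
  rw [intervalIntegral.integral_comp_sub_right (fun y => lam * y ^ 2 + τ)]
  rw [intervalIntegral.integral_add
    (Continuous.intervalIntegrable (by fun_prop) _ _) (by simp)]
  simp
  ring

/-- The tail of a density that is nonincreasing to the right of `m` is bounded by the integral
of a quadratic whose primitive dominates that of the tail indicator. -/
lemma lintegral_Ici_le_of_antitoneOn {m k r lam τ : ℝ} {g : ℝ → ℝ≥0∞}
    (hg : AntitoneOn g (Ioi m)) (hk : 0 < k) (hkr : k ≤ r) (hl : 0 ≤ lam) (hτ : 0 ≤ τ)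
    (hr : lam * r ^ 2 + τ = 1) (hH : r - k ≤ lam * r ^ 3 / 3 + τ * r) :
    ∫⁻ x in Ici (m + k), g x ≤
      ∫⁻ x in Ioi m, ENNReal.ofReal (lam * (x - m) ^ 2 + τ) * g x := by
  set φ : ℝ → ℝ := fun x => lam * (x - m) ^ 2 + τ with hφ
  have hφ0 : ∀ x, 0 ≤ φ x := fun x => by positivity
  set ψ : ℝ → ℝ≥0∞ := (Icc (m + k) (m + r)).indicator fun x => ENNReal.ofReal (1 - φ x) with hψ
  have hψm : Measurable ψ := Measurable.indicator (by fun_prop) measurableSet_Icc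
  have hpt : ∀ x ∈ Ici (m + k), g x ≤ ENNReal.ofReal (φ x) * g x + g (m + k) * ψ x := by
    intro x hx
    have hx' : m + k ≤ x := hx
    by_cases hxr : x ≤ m + r
    · have h1 : φ x ≤ 1 := by
        have : (x - m) ^ 2 ≤ r ^ 2 := by
          apply pow_le_pow_left₀ <;> linarith
        have := mul_le_mul_of_nonneg_left this hl
        simp only [hφ]
        linarith
      rw [hψ, indicator_of_mem (show x ∈ Icc (m + k) (m + r) from ⟨hx', hxr⟩)]
      calc g x = (ENNReal.ofReal (φ x) + ENNReal.ofReal (1 - φ x)) * g x := by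
            rw [← ENNReal.ofReal_add (hφ0 x) (by linarith)]; simp
        _ = ENNReal.ofReal (φ x) * g x + g x * ENNReal.ofReal (1 - φ x) := by ring
        _ ≤ _ := by
            gcongr
            exact hg (mem_Ioi.2 (by linarith)) (mem_Ioi.2 (by linarith)) hx'
    · have h1 : 1 ≤ φ x := by
        have : r ^ 2 ≤ (x - m) ^ 2 := by
          apply pow_le_pow_left₀ <;> linarith
        have := mul_le_mul_of_nonneg_left this hl
        simp only [hφ]
        linarith
      calc g x = 1 * g x := by simp
        _ ≤ ENNReal.ofReal (φ x) * g x := by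
            gcongr
            exact ENNReal.one_le_ofReal.2 h1
        _ ≤ _ := le_self_add
  have hψle : ∫⁻ x in Ici (m + k), ψ x ≤ ∫⁻ x in Ioo m (m + k), ENNReal.ofReal (φ x) := by
    rw [hψ, lintegral_indicator measurableSet_Icc, Measure.restrict_restrict measurableSet_Icc,
      inter_eq_left.2 Icc_subset_Ici_self, lintegral_Icc_ofReal_sub_sq m k r lam τ hkr,
      lintegral_Ioo_ofReal_sq_add m k lam τ hk.le hl hτ]
    · apply ENNReal.ofReal_le_ofReal
      linarith
    · rintro x ⟨hx1, hx2⟩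
      have : (x - m) ^ 2 ≤ r ^ 2 := by
        apply pow_le_pow_left₀ <;> linarith
      have := mul_le_mul_of_nonneg_left this hl
      linarith
  calc ∫⁻ x in Ici (m + k), g x
      ≤ ∫⁻ x in Ici (m + k), (ENNReal.ofReal (φ x) * g x + g (m + k) * ψ x) :=
        setLIntegral_mono' measurableSet_Ici hpt
    _ = (∫⁻ x in Ici (m + k), ENNReal.ofReal (φ x) * g x)
          + ∫⁻ x in Ici (m + k), g (m + k) * ψ x :=
        lintegral_add_right _ (hψm.const_mul _)
    _ ≤ (∫⁻ x in Ici (m + k), ENNReal.ofReal (φ x) * g x)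
          + ∫⁻ x in Ioo m (m + k), ENNReal.ofReal (φ x) * g x := by
        refine add_le_add le_rfl ?_
        rw [lintegral_const_mul _ hψm]
        calc _ ≤ g (m + k) * ∫⁻ x in Ioo m (m + k), ENNReal.ofReal (φ x) := by gcongr
          _ = ∫⁻ x in Ioo m (m + k), g (m + k) * ENNReal.ofReal (φ x) :=
              (lintegral_const_mul _ (by fun_prop)).symm
          _ ≤ _ := by
              refine setLIntegral_mono' measurableSet_Ioo fun x hx => ?_
              rw [mul_comm]
              gcongr
              exact hg hx.1 (mem_Ioi.2 (by linarith)) hx.2.le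
    _ = ∫⁻ x in Ici (m + k) ∪ Ioo m (m + k), ENNReal.ofReal (φ x) * g x := by
        rw [lintegral_union measurableSet_Ioo]
        rw [Set.disjoint_left]
        intro x hx hx'
        exact absurd hx'.2 (not_lt.2 hx)
    _ ≤ _ := by
        apply lintegral_mono_set
        rintro x (hx | hx)
        · have : m + k ≤ x := hx
          exact mem_Ioi.2 (by linarith)
        · exact hx.1

/-- A symmetric distribution puts at most half of the integral of an even function on the
right of its mean. -/
lemma IsSymmetricDist.two_mul_lintegral_Ioi_le {Q : Measure ℝ} [IsFiniteMeasure Q]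
    (hs : IsSymmetricDist Q) {φ : ℝ → ℝ≥0∞} (hφ : Measurable φ)
    (heven : ∀ x, φ (2 * distMean Q - x) = φ x) :
    2 * ∫⁻ x in Ioi (distMean Q), φ x ∂Q ≤ ∫⁻ x, φ x ∂Q := by
  have hrefl : ∫⁻ x in Ioi (distMean Q), φ x ∂Q = ∫⁻ x in Iio (distMean Q), φ x ∂Q := by
    have hm : Measurable fun x : ℝ => 2 * distMean Q - x := by fun_prop
    have h := setLIntegral_map (μ := Q) (measurableSet_Ioi (a := distMean Q)) hφ hm
    rw [hs.map_reflect] at h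
    rw [h]
    simp only [heven]
    congr 2
    ext x
    simp only [mem_preimage, mem_Ioi, mem_Iio]
    constructor <;> intro _ <;> linarith
  calc 2 * ∫⁻ x in Ioi (distMean Q), φ x ∂Q
      = ∫⁻ x in Ioi (distMean Q) ∪ Iio (distMean Q), φ x ∂Q := by
        rw [lintegral_union measurableSet_Iio, ← hrefl, two_mul]
        rw [Set.disjoint_left]
        intro x hx hx'
        exact lt_asymm (mem_Ioi.1 hx) (mem_Iio.1 hx')
    _ ≤ _ := setLIntegral_le_lintegral _ _

lemma IsSymmetricDist.measureReal_Ioi_le {Q : Measure ℝ} [IsProbabilityMeasure Q]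
    (hs : IsSymmetricDist Q) : (Q (Ioi (distMean Q))).toReal ≤ 1 / 2 := by
  have h := hs.two_mul_lintegral_Ioi_le (φ := fun _ => 1) measurable_const (fun _ => rfl)
  simp only [lintegral_const, measure_univ, Measure.restrict_apply_univ, one_mul] at h
  have h' := ENNReal.toReal_mono ENNReal.one_ne_top h
  rw [ENNReal.toReal_mul] at h'
  simp at h'
  linarith

lemma integrable_sub_sq {Q : Measure ℝ} [IsFiniteMeasure Q]
    (h : Integrable (fun x => x ^ 2) Q) (a : ℝ) : Integrable (fun x => (x - a) ^ 2) Q := by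
  have h2 : MemLp (fun x : ℝ => x) 2 Q :=
    (memLp_two_iff_integrable_sq (by fun_prop)).2 h
  exact (h2.sub (memLp_const a)).integrable_sq

/-- One-sided Gauss inequality in dual form. -/
lemma measureReal_Ici_le_of_symm_unimodal {Q : Measure ℝ} [IsProbabilityMeasure Q]
    (hs : IsSymmetricDist Q) (hu : Unimodal Q) (h2 : Integrable (fun x => x ^ 2) Q)
    {k r lam τ : ℝ} (hk : 0 < k) (hkr : k ≤ r) (hl : 0 ≤ lam) (hτ : 0 ≤ τ)
    (hr : lam * r ^ 2 + τ = 1) (hH : r - k ≤ lam * r ^ 3 / 3 + τ * r) :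
    (Q (Ici (distMean Q + k))).toReal ≤ (lam * distVar Q + τ) / 2 := by
  obtain ⟨x₀, hx₀, c, f, hQ, hanti⟩ := hu.exists_mode_le_mean hs
  have hvar : Integrable (fun x => (x - distMean Q) ^ 2) Q := integrable_sub_sq h2 _
  have hint : Integrable (fun x => lam * (x - distMean Q) ^ 2 + τ) Q :=
    (hvar.const_mul lam).add (integrable_const τ)
  have hhalf := hs.two_mul_lintegral_Ioi_le
    (φ := fun x => ENNReal.ofReal (lam * (x - distMean Q) ^ 2 + τ)) (by fun_prop)
    (fun x => by congr 1; ring)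
  rw [← ofReal_integral_eq_lintegral_ofReal hint
    (Filter.Eventually.of_forall fun x => by positivity),
    integral_add (hvar.const_mul lam) (integrable_const τ), integral_const_mul] at hhalf
  simp only [integral_const, probReal_univ, one_smul] at hhalf
  change _ ≤ ENNReal.ofReal (lam * distVar Q + τ) at hhalf
  have hv0 : 0 ≤ distVar Q := integral_nonneg fun x => sq_nonneg _
  generalize distVar Q = V at *
  generalize distMean Q = m at *
  have hanti' : AntitoneOn f (Ioi m) := hanti.mono (Ioi_subset_Ioi hx₀)
  have htail : Q (Ici (m + k)) = ∫⁻ x in Ici (m + k), f x := by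
    have : x₀ ∉ Ici (m + k) := by simp; linarith
    rw [hQ]
    simp [withDensity_apply, this]
  have hle : ∫⁻ x in Ioi m, ENNReal.ofReal (lam * (x - m) ^ 2 + τ) * f x ≤
      ∫⁻ x in Ioi m, ENNReal.ofReal (lam * (x - m) ^ 2 + τ) ∂Q := by
    have hfm : AEMeasurable f (volume.restrict (Ioi m)) :=
      aemeasurable_restrict_of_antitoneOn measurableSet_Ioi hanti'
    calc _ = ∫⁻ x in Ioi m, ENNReal.ofReal (lam * (x - m) ^ 2 + τ) ∂volume.withDensity f := by
          rw [restrict_withDensity measurableSet_Ioi,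
            lintegral_withDensity_eq_lintegral_mul₀ hfm (by fun_prop)]
          simp [mul_comm]
      _ ≤ _ := by
          apply lintegral_mono'
          · apply Measure.restrict_mono le_rfl
            rw [hQ]
            exact Measure.le_add_left le_rfl
          · exact le_rfl
  have hmain : 2 * Q (Ici (m + k)) ≤ ENNReal.ofReal (lam * V + τ) := by
    refine le_trans ?_ hhalf
    gcongr
    rw [htail]
    exact (lintegral_Ici_le_of_antitoneOn hanti' hk hkr hl hτ hr hH).trans hle
  have h' := ENNReal.toReal_mono ENNReal.ofReal_ne_top hmain
  rw [ENNReal.toReal_mul, ENNReal.toReal_ofReal (by positivity)] at h'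
  simp at h'
  linarith

/-- The mixture of a point mass at `μ` and the uniform distribution on `[μ - b, μ + b]`, with
weights `1 - w` and `w`. -/
noncomputable def diracUniform (μ w b : ℝ) : Measure ℝ :=
  ENNReal.ofReal (1 - w) • Measure.dirac μ +
    ENNReal.ofReal (w / (2 * b)) • volume.restrict (Icc (μ - b) (μ + b))

section diracUniform

variable {μ w b : ℝ}

lemma isProbabilityMeasure_diracUniform (hw0 : 0 ≤ w) (hw1 : w ≤ 1) (hb : 0 < b) :
    IsProbabilityMeasure (diracUniform μ w b) := by
  constructor
  simp only [diracUniform, Measure.add_apply, Measure.smul_apply, measure_univ, smul_eq_mul,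
    Measure.restrict_apply_univ, Real.volume_Icc, mul_one]
  rw [← ENNReal.ofReal_mul (by positivity), ← ENNReal.ofReal_add (by linarith)
    (mul_nonneg (by positivity) (by linarith)), ← ENNReal.ofReal_one]
  congr 1
  field_simp
  ring

lemma integrable_diracUniform {g : ℝ → ℝ} (hg : Continuous g) :
    Integrable g (diracUniform μ w b) := by
  refine Integrable.add_measure (Integrable.smul_measure ?_ ENNReal.ofReal_ne_top)
    (Integrable.smul_measure hg.continuousOn.integrableOn_Icc ENNReal.ofReal_ne_top)
  exact integrable_dirac (by simp)

lemma integral_diracUniform (hw0 : 0 ≤ w) (hw1 : w ≤ 1) (hb : 0 < b) {g : ℝ → ℝ}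
    (hg : Continuous g) :
    ∫ x, g x ∂diracUniform μ w b =
      (1 - w) * g μ + w / (2 * b) * ∫ x in (μ - b)..(μ + b), g x := by
  rw [diracUniform, integral_add_measure
    (Integrable.smul_measure (integrable_dirac (by simp)) ENNReal.ofReal_ne_top)
    (Integrable.smul_measure hg.continuousOn.integrableOn_Icc ENNReal.ofReal_ne_top),
    integral_smul_measure, integral_smul_measure, integral_dirac,
    integral_Icc_eq_integral_Ioc, ← intervalIntegral.integral_of_le (by linarith),
    ENNReal.toReal_ofReal (by linarith), ENNReal.toReal_ofReal (by positivity)]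
  simp

lemma distMean_diracUniform (hw0 : 0 ≤ w) (hw1 : w ≤ 1) (hb : 0 < b) :
    distMean (diracUniform μ w b) = μ := by
  rw [distMean, integral_diracUniform hw0 hw1 hb continuous_id', integral_id]
  field_simp
  ring

lemma distVar_diracUniform (hw0 : 0 ≤ w) (hw1 : w ≤ 1) (hb : 0 < b) :
    distVar (diracUniform μ w b) = w * b ^ 2 / 3 := by
  rw [distVar, distMean_diracUniform hw0 hw1 hb, integral_diracUniform hw0 hw1 hb (by fun_prop),
    intervalIntegral.integral_comp_sub_right (fun y => y ^ 2), integral_pow]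
  field_simp
  ring

lemma isSymmetricDist_diracUniform (hw0 : 0 ≤ w) (hw1 : w ≤ 1) (hb : 0 < b) :
    IsSymmetricDist (diracUniform μ w b) := by
  intro x
  rw [distMean_diracUniform hw0 hw1 hb]
  simp only [diracUniform, Measure.add_apply, Measure.smul_apply, smul_eq_mul,
    Measure.restrict_apply measurableSet_Iic, Measure.restrict_apply measurableSet_Ici]
  have h1 : Iic (μ - x) ∩ Icc (μ - b) (μ + b) = Icc (μ - b) (min (μ - x) (μ + b)) := by
    ext y; simp only [mem_inter_iff, mem_Iic, mem_Icc, le_min_iff]; tauto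
  have h2 : Ici (μ + x) ∩ Icc (μ - b) (μ + b) = Icc (max (μ + x) (μ - b)) (μ + b) := by
    ext y; simp only [mem_inter_iff, mem_Ici, mem_Icc, max_le_iff]; tauto
  have h3 : min (μ - x) (μ + b) - (μ - b) = μ + b - max (μ + x) (μ - b) := by
    rcases le_total (-x) b with h | h
    · rw [min_eq_left (by linarith), max_eq_left (by linarith)]; ring
    · rw [min_eq_right (by linarith), max_eq_right (by linarith)]
  rw [h1, h2, Real.volume_Icc, Real.volume_Icc, h3]
  congr 2
  rw [Measure.dirac_apply' _ measurableSet_Iic, Measure.dirac_apply' _ measurableSet_Ici]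
  simp [indicator]

lemma unimodal_diracUniform : Unimodal (diracUniform μ w b) := by
  refine ⟨μ, ENNReal.ofReal (1 - w),
    (Icc (μ - b) (μ + b)).indicator fun _ => ENNReal.ofReal (w / (2 * b)), ?_, ?_, ?_⟩
  · rw [withDensity_indicator measurableSet_Icc, withDensity_const, diracUniform]
  · intro x hx y hy hxy
    simp only [mem_Iio] at hx hy
    by_cases h : x ∈ Icc (μ - b) (μ + b)
    · have : y ∈ Icc (μ - b) (μ + b) := ⟨by linarith [h.1], by linarith [h.1]⟩
      simp [h, this]
    · simp [h]
  · intro x hx y hy hxy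
    simp only [mem_Ioi] at hx hy
    by_cases h : y ∈ Icc (μ - b) (μ + b)
    · have : x ∈ Icc (μ - b) (μ + b) := ⟨by linarith [h.2], by linarith [h.2]⟩
      simp [h, this]
    · simp [h]

lemma memH_diracUniform {σ : ℝ} (hw0 : 0 ≤ w) (hw1 : w ≤ 1) (hb : 0 < b)
    (hσ : w * b ^ 2 / 3 ≤ σ ^ 2) : MemH μ σ (diracUniform μ w b) :=
  ⟨isProbabilityMeasure_diracUniform hw0 hw1 hb, integrable_diracUniform (by fun_prop),
    (distMean_diracUniform hw0 hw1 hb).le, (distVar_diracUniform hw0 hw1 hb).trans_le hσ⟩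

lemma le_measureReal_Ioi_diracUniform (hw0 : 0 ≤ w) (hw1 : w ≤ 1) (hb : 0 < b) {k : ℝ}
    (hk : 0 ≤ k) :
    w * (b - k) / (2 * b) ≤ (diracUniform μ w b (Ioi (μ + k))).toReal := by
  have := isProbabilityMeasure_diracUniform (μ := μ) hw0 hw1 hb
  rw [← ENNReal.ofReal_le_iff_le_toReal (measure_ne_top _ _)]
  have h1 : Ioi (μ + k) ∩ Icc (μ - b) (μ + b) = Ioc (μ + k) (μ + b) := by
    ext y
    simp only [mem_inter_iff, mem_Ioi, mem_Icc, mem_Ioc]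
    constructor
    · rintro ⟨h, -, h'⟩; exact ⟨h, h'⟩
    · rintro ⟨h, h'⟩; exact ⟨h, by linarith, h'⟩
  simp only [diracUniform, Measure.add_apply, Measure.smul_apply, smul_eq_mul,
    Measure.restrict_apply measurableSet_Ioi, h1, Real.volume_Ioc]
  rw [← ENNReal.ofReal_mul (by positivity)]
  refine le_trans (le_of_eq ?_) le_add_self
  congr 1
  field_simp
  ring

end diracUniform

section pUS

variable {μ σ α x : ℝ}

lemma lt_of_pUS_lt_one (hσ : 0 < σ) (h : pUS μ σ x < 1) : μ < x := by
  by_contra! hx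
  have hz : (x - μ) / σ ≤ 0 := div_nonpos_of_nonpos_of_nonneg (by linarith) hσ.le
  have h43 : 0 < √(4 / 3 : ℝ) := Real.sqrt_pos.2 (by norm_num)
  rw [pUS, if_neg (by linarith), if_neg (by linarith)] at h
  exact lt_irrefl _ h

lemma sqrt_three_mul_sqrt_four_thirds : √3 * √(4 / 3 : ℝ) = 2 := by
  rw [← Real.sqrt_mul (by norm_num), show (3 * (4 / 3) : ℝ) = 2 ^ 2 by norm_num]
  exact Real.sqrt_sq (by norm_num)

/-- For `α ≥ 1/6` the sublevel sets of `pUS` are governed by its linear branch. -/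
lemma pUS_le_iff_linear (hσ : 0 < σ) (hα : 1 / 6 ≤ α) (hα' : α < 1 / 2) :
    pUS μ σ x ≤ α ↔ μ + σ * ((3 - 6 * α) / √3) ≤ x := by
  have h43 : 0 < √(4 / 3 : ℝ) := Real.sqrt_pos.2 (by norm_num)
  have h3 : 0 < √(3 : ℝ) := Real.sqrt_pos.2 (by norm_num)
  have hmul := sqrt_three_mul_sqrt_four_thirds
  have hx : μ + σ * ((3 - 6 * α) / √3) ≤ x ↔ 3 - 6 * α ≤ √3 * ((x - μ) / σ) := by
    rw [← le_sub_iff_add_le', mul_comm σ, ← le_div_iff₀ hσ, div_le_iff₀ h3, mul_comm √3]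
  rw [hx, pUS]
  generalize (x - μ) / σ = z
  split_ifs with h1 h2
  · have hz2 : 4 / 3 ≤ z ^ 2 := (Real.sqrt_le_left (h43.le.trans h1)).1 h1
    have : √3 * √(4 / 3) ≤ √3 * z := by gcongr
    refine iff_of_true ?_ (by linarith)
    rw [div_le_iff₀ (by linarith)]
    nlinarith
  · constructor <;> intro _ <;> linarith
  · refine iff_of_false (by linarith) ?_
    have := mul_nonpos_of_nonneg_of_nonpos h3.le (not_lt.1 h2)
    linarith

/-- For `α < 1/6` the sublevel sets of `pUS` are governed by its quadratic branch. -/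
lemma pUS_le_iff_quadratic (hσ : 0 < σ) (hα : 0 < α) (hα' : α < 1 / 6) :
    pUS μ σ x ≤ α ↔ μ + σ * √(2 / (9 * α)) ≤ x := by
  have h43 : 0 < √(4 / 3 : ℝ) := Real.sqrt_pos.2 (by norm_num)
  have h3 : 0 < √(3 : ℝ) := Real.sqrt_pos.2 (by norm_num)
  have hmul := sqrt_three_mul_sqrt_four_thirds
  have hx : μ + σ * √(2 / (9 * α)) ≤ x ↔ √(2 / (9 * α)) ≤ (x - μ) / σ := by
    rw [← le_sub_iff_add_le', mul_comm σ, ← le_div_iff₀ hσ]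
  have hlt : √(4 / 3 : ℝ) < √(2 / (9 * α)) := by
    apply Real.sqrt_lt_sqrt (by norm_num)
    rw [lt_div_iff₀ (by positivity)]
    linarith
  rw [hx, pUS]
  generalize (x - μ) / σ = z
  split_ifs with h1 h2
  · have hz : 0 < z := h43.trans_le h1
    rw [Real.sqrt_le_left hz.le, div_le_iff₀ (by positivity), div_le_iff₀ (by positivity)]
    constructor <;> intro _ <;> linarith
  · refine iff_of_false ?_ (by linarith)
    have : √3 * z < √3 * √(4 / 3) := by gcongr; linarith
    linarith
  · exact iff_of_false (by linarith) (by linarith)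

end pUS

/-- `pUS` is a p-variable for `H_US(μ,σ)`. -/
lemma measureReal_pUS_le {μ σ : ℝ} (hσ : 0 < σ) {Q : Measure ℝ} (hQ : MemH μ σ Q)
    (hs : IsSymmetricDist Q) (hu : Unimodal Q) {α : ℝ} (hα : α ∈ Ioo (0 : ℝ) 1) :
    (Q {x | pUS μ σ x ≤ α}).toReal ≤ α := by
  obtain ⟨hprob, h2, hmean, hvar⟩ := hQ
  obtain ⟨hα0, hα1⟩ := hα
  have h3 : 0 < √(3 : ℝ) := Real.sqrt_pos.2 (by norm_num)
  have h3sq : √(3 : ℝ) ^ 2 = 3 := Real.sq_sqrt (by norm_num)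
  rcases le_or_gt (1 / 2) α with h | h
  · calc (Q {x | pUS μ σ x ≤ α}).toReal ≤ (Q (Ioi (distMean Q))).toReal := by
          refine ENNReal.toReal_mono (measure_ne_top _ _) (measure_mono fun x hx => ?_)
          exact hmean.trans_lt (lt_of_pUS_lt_one hσ (lt_of_le_of_lt hx hα1))
      _ ≤ 1 / 2 := hs.measureReal_Ioi_le
      _ ≤ α := h
  have hshift : ∀ k, (∀ x, pUS μ σ x ≤ α ↔ μ + k ≤ x) →
      (Q {x | pUS μ σ x ≤ α}).toReal ≤ (Q (Ici (distMean Q + k))).toReal := by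
    intro k hk
    refine ENNReal.toReal_mono (measure_ne_top _ _) (measure_mono fun x hx => ?_)
    have := (hk x).1 hx
    exact mem_Ici.2 (by linarith)
  rcases le_or_gt (1 / 6) α with h6 | h6
  · refine (hshift _ fun x => pUS_le_iff_linear hσ h6 h).trans ?_
    set z := (3 - 6 * α) / √3 with hz
    have hz0 : 0 < z := div_pos (by linarith) h3
    have hzα : √3 * z = 3 - 6 * α := mul_div_cancel₀ _ h3.ne'
    have hlam : z / (2 * √3 * σ ^ 2) * σ ^ 2 = √3 * z / 6 := by
      field_simp
      rw [h3sq]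
      ring
    have hlr : z / (2 * √3 * σ ^ 2) * (√3 * σ) ^ 2 = √3 * z / 2 := by
      rw [mul_pow, h3sq]
      linear_combination 3 * hlam
    refine (measureReal_Ici_le_of_symm_unimodal hs hu h2 (r := √3 * σ)
      (lam := z / (2 * √3 * σ ^ 2)) (τ := 1 - √3 * z / 2) (by positivity) ?_ (by positivity)
      (by linarith) (by linarith) ?_).trans ?_
    · have : z ≤ √3 := by nlinarith
      nlinarith
    · have : z / (2 * √3 * σ ^ 2) * (√3 * σ) ^ 3 / 3 = σ * z / 2 := by
        linear_combination (√3 * σ / 3) * hlr + σ * z / 6 * h3sq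
      rw [this]
      linear_combination (σ * z / 2) * h3sq
    · have := mul_le_mul_of_nonneg_left hvar
        (show 0 ≤ z / (2 * √3 * σ ^ 2) by positivity)
      linarith
  · refine (hshift _ fun x => pUS_le_iff_quadratic hσ hα0 h6).trans ?_
    set z := √(2 / (9 * α)) with hz
    have hz0 : 0 < z := Real.sqrt_pos.2 (by positivity)
    have hz2 : z ^ 2 = 2 / (9 * α) := Real.sq_sqrt (by positivity)
    refine (measureReal_Ici_le_of_symm_unimodal hs hu h2 (r := 3 / 2 * (σ * z))
      (lam := 4 / (9 * (σ * z) ^ 2)) (τ := 0) (by positivity) ?_ (by positivity)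
      le_rfl ?_ ?_).trans ?_
    · have : 0 < σ * z := by positivity
      linarith
    · field_simp
      norm_num
    · apply le_of_eq
      field_simp
      norm_num
    · have := mul_le_mul_of_nonneg_left hvar
        (show 0 ≤ 4 / (9 * (σ * z) ^ 2) by positivity)
      have h4 : 4 / (9 * (σ * z) ^ 2) * σ ^ 2 = 2 * α := by
        rw [mul_pow, hz2]
        field_simp
        norm_num
      linarith

/-- The bound `α` is attained by a mixture of a point mass and a uniform distribution. -/
lemma exists_le_measureReal_pUS {μ σ : ℝ} (hσ : 0 < σ) {α : ℝ} (hα : α ∈ Ioc (0 : ℝ) (1 / 2)) :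
    ∃ Q : Measure ℝ, MemH μ σ Q ∧ IsSymmetricDist Q ∧ Unimodal Q ∧
      α ≤ (Q {x | pUS μ σ x ≤ α}).toReal := by
  obtain ⟨hα0, hα1⟩ := hα
  have h3 : 0 < √(3 : ℝ) := Real.sqrt_pos.2 (by norm_num)
  have h3sq : √(3 : ℝ) ^ 2 = 3 := Real.sq_sqrt (by norm_num)
  have key : ∀ w b k : ℝ, 0 ≤ w → w ≤ 1 → 0 < b → w * b ^ 2 / 3 ≤ σ ^ 2 → 0 ≤ k →
      α ≤ w * (b - k) / (2 * b) → (∀ x, μ + k < x → pUS μ σ x ≤ α) →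
      ∃ Q : Measure ℝ, MemH μ σ Q ∧ IsSymmetricDist Q ∧ Unimodal Q ∧
        α ≤ (Q {x | pUS μ σ x ≤ α}).toReal := by
    intro w b k hw0 hw1 hb hwb hk hαle hsub
    have := isProbabilityMeasure_diracUniform (μ := μ) hw0 hw1 hb
    refine ⟨diracUniform μ w b, memH_diracUniform hw0 hw1 hb hwb,
      isSymmetricDist_diracUniform hw0 hw1 hb, unimodal_diracUniform, hαle.trans ?_⟩
    exact (le_measureReal_Ioi_diracUniform hw0 hw1 hb hk).trans
      (ENNReal.toReal_mono (measure_ne_top _ _) (measure_mono hsub))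
  rcases le_or_gt (1 / 6) α with h6 | h6
  · have hz0 : 0 ≤ (3 - 6 * α) / √3 := div_nonneg (by linarith) h3.le
    refine key 1 (√3 * σ) (σ * ((3 - 6 * α) / √3)) zero_le_one le_rfl (by positivity) ?_
      (by positivity) ?_ ?_
    · rw [mul_pow, h3sq]
      linarith
    · apply le_of_eq
      field_simp
      rw [h3sq]
      ring
    · intro x hx
      rcases hα1.lt_or_eq with h | rfl
      · exact (pUS_le_iff_linear hσ h6 h).2 hx.le
      · norm_num at hx
        have hz : 0 < (x - μ) / σ := div_pos (by linarith) hσ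
        rw [pUS]
        generalize (x - μ) / σ = z at hz
        split_ifs with h1
        · have hz2 : 4 / 3 ≤ z ^ 2 := (Real.sqrt_le_left hz.le).1 h1
          rw [div_le_iff₀ (by positivity)]
          linarith
        · have : 0 < √3 * z := by positivity
          linarith
  · have hz0 : 0 < √(2 / (9 * α)) := Real.sqrt_pos.2 (by positivity)
    have hz2 : √(2 / (9 * α)) ^ 2 = 2 / (9 * α) := Real.sq_sqrt (by positivity)
    have hk : 0 < σ * √(2 / (9 * α)) := by positivity
    refine key (6 * α) (3 / 2 * (σ * √(2 / (9 * α)))) (σ * √(2 / (9 * α))) (by positivity)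
      (by linarith) (by positivity) ?_ hk.le ?_
      fun x hx => (pUS_le_iff_quadratic hσ hα0 h6).2 hx.le
    · apply le_of_eq
      rw [mul_pow, mul_pow, hz2]
      field_simp
      norm_num
    · apply le_of_eq
      generalize σ * √(2 / (9 * α)) = k at hk
      field_simp
      norm_num

/-- `pUS μ σ` is a semi-precise p-variable for `H_US(μ,σ)`:
(i) valid for all `α ∈ (0,1)`; (ii) for `α ∈ (0,1/2]` the sup of `Q({pUS ≤ α})`
over `H_US(μ,σ)` equals `α`. -/
theorem stmt_15 (μ σ : ℝ) (hσ : 0 < σ) :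
    (∀ Q : Measure ℝ, MemH μ σ Q → IsSymmetricDist Q → Unimodal Q →
      ∀ α ∈ Ioo (0:ℝ) 1, (Q {x | pUS μ σ x ≤ α}).toReal ≤ α) ∧
    (∀ α ∈ Ioc (0:ℝ) (1/2),
      IsLUB {r : ℝ | ∃ Q : Measure ℝ, MemH μ σ Q ∧ IsSymmetricDist Q ∧ Unimodal Q ∧
        r = (Q {x | pUS μ σ x ≤ α}).toReal} α) := by
  refine ⟨fun Q hQ hs hu α hα => measureReal_pUS_le hσ hQ hs hu hα, fun α hα => ?_⟩
  have hα' : α ∈ Ioo (0 : ℝ) 1 := ⟨hα.1, by linarith [hα.2]⟩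
  obtain ⟨Q, hQ, hs, hu, hle⟩ := exists_le_measureReal_pUS (μ := μ) hσ hα
  refine ⟨?_, fun b hb => hle.trans (hb ⟨Q, hQ, hs, hu, rfl⟩)⟩
  rintro r ⟨Q', hQ', hs', hu', rfl⟩
  exact measureReal_pUS_le hσ hQ' hs' hu' hα'
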